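/- arXiv:2310.05328 — 3 statements merged into one kernel-verified Lean document; each statement's English description precedes it below -/
import Mathlib

section
/- For every n ≥ 1, all real numbers y_1, …, y_n, every real r > 0, and every integer 1 ≤ ℓ ≤ n, one has Σ_{m=0}^{ℓ} binom(ℓ,m) · |s_m(y)| · r^m ≥ (1 + |s_ℓ(y)|^(2/ℓ) · r^2)^(ℓ/2). -/
open Finset Real

/-- The non-normalized elementary symmetric function `S_m(y)`. -/
noncomputable def esymmS (n m : ℕ) (y : Fin n → ℝ) : ℝ :=
  ∑ A ∈ powersetCard m (univ : Finset (Fin n)), ∏ i ∈ A, y i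

/-- The elementary symmetric mean `s_m(y) = S_m(y) / binom(n,m)`. -/
noncomputable def smean (n m : ℕ) (y : Fin n → ℝ) : ℝ :=
  esymmS n m y / (n.choose m)

/-!
Scaling `y` by `r` reduces to `r = 1`. Differentiating `∏ (X - y_j)` preserves real-rootedness, by
Rolle's theorem, and preserves each symmetric mean that is still defined, so `n - ℓ` derivatives
yield a multiset `t` of `ℓ` reals with the same means `s_0, …, s_ℓ`. For it, `ℓ.choose m * s_m` is
`t.esymm m`, and `s_ℓ` is `t.prod`. Since `|I + x| ^ 2 = 1 + x ^ 2` for real `x`, the triangle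
inequality for the expansion of `∏ (I + x)` over `x ∈ t` gives `√∏ (1 + x ^ 2) ≤ ∑ |t.esymm m|`,
while superadditivity of the geometric mean (AM-GM for the ratios `a / (a + b)` and `b / (a + b)`)
gives `(1 + |∏ x| ^ (2 / ℓ)) ^ (ℓ / 2) ≤ √∏ (1 + x ^ 2)`.
-/

section WeightedGeometricMean

variable {ι : Type*} {s : Finset ι} {w : ι → ℝ}

lemma prod_rpow_le_prod_rpow_mul_sum_div {c d : ι → ℝ} (hw : ∀ i ∈ s, 0 ≤ w i)
    (hw_sum : ∑ i ∈ s, w i = 1) (hc : ∀ i ∈ s, 0 ≤ c i) (hcd : ∀ i ∈ s, c i ≤ d i) :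
    ∏ i ∈ s, c i ^ w i ≤ (∏ i ∈ s, d i ^ w i) * ∑ i ∈ s, w i * (c i / d i) := by
  have hd : ∀ i ∈ s, 0 ≤ d i := fun i hi ↦ (hc i hi).trans (hcd i hi)
  have hratio : ∀ i ∈ s, 0 ≤ c i / d i := fun i hi ↦ div_nonneg (hc i hi) (hd i hi)
  calc ∏ i ∈ s, c i ^ w i
      = ∏ i ∈ s, d i ^ w i * (c i / d i) ^ w i := by
        refine prod_congr rfl fun i hi ↦ ?_
        rw [← mul_rpow (hd i hi) (hratio i hi), mul_div_cancel_of_imp']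
        exact fun h ↦ le_antisymm (h ▸ hcd i hi) (hc i hi)
    _ = (∏ i ∈ s, d i ^ w i) * ∏ i ∈ s, (c i / d i) ^ w i := prod_mul_distrib
    _ ≤ (∏ i ∈ s, d i ^ w i) * ∑ i ∈ s, w i * (c i / d i) :=
        mul_le_mul_of_nonneg_left (geom_mean_le_arith_mean_weighted s w _ hw hw_sum hratio)
          (prod_nonneg fun i hi ↦ rpow_nonneg (hd i hi) _)

lemma prod_rpow_add_prod_rpow_le_prod_add_rpow {a b : ι → ℝ} (hw : ∀ i ∈ s, 0 ≤ w i)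
    (hw_sum : ∑ i ∈ s, w i = 1) (ha : ∀ i ∈ s, 0 ≤ a i) (hb : ∀ i ∈ s, 0 ≤ b i) :
    ∏ i ∈ s, a i ^ w i + ∏ i ∈ s, b i ^ w i ≤ ∏ i ∈ s, (a i + b i) ^ w i := by
  have hprod : 0 ≤ ∏ i ∈ s, (a i + b i) ^ w i :=
    prod_nonneg fun i hi ↦ rpow_nonneg (add_nonneg (ha i hi) (hb i hi)) _
  have sum_ratios_le : ∑ i ∈ s, w i * (a i / (a i + b i)) +
      ∑ i ∈ s, w i * (b i / (a i + b i)) ≤ 1 := by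
    rw [← sum_add_distrib, ← hw_sum]
    refine sum_le_sum fun i hi ↦ ?_
    rw [← mul_add, ← add_div]
    exact mul_le_of_le_one_right (hw i hi) (div_self_le_one _)
  calc ∏ i ∈ s, a i ^ w i + ∏ i ∈ s, b i ^ w i
      ≤ (∏ i ∈ s, (a i + b i) ^ w i) *
          (∑ i ∈ s, w i * (a i / (a i + b i)) + ∑ i ∈ s, w i * (b i / (a i + b i))) := by
        rw [mul_add]
        exact add_le_add
          (prod_rpow_le_prod_rpow_mul_sum_div hw hw_sum ha fun i hi ↦
            le_add_of_nonneg_right (hb i hi))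
          (prod_rpow_le_prod_rpow_mul_sum_div hw hw_sum hb fun i hi ↦
            le_add_of_nonneg_left (ha i hi))
    _ ≤ ∏ i ∈ s, (a i + b i) ^ w i := mul_le_of_le_one_right hprod sum_ratios_le

end WeightedGeometricMean

lemma one_add_prod_rpow_inv_card_le {s : Multiset ℝ} (hs : s ≠ 0) (hs_nonneg : ∀ x ∈ s, 0 ≤ x) :
    1 + s.prod ^ (s.card : ℝ)⁻¹ ≤ (s.map (1 + ·)).prod ^ (s.card : ℝ)⁻¹ := by
  have hx : ∀ x : s, 0 ≤ (x : ℝ) := fun x ↦ hs_nonneg x Multiset.coe_mem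
  have hcard : (s.card : ℝ) ≠ 0 := by simpa using hs
  have h := prod_rpow_add_prod_rpow_le_prod_add_rpow (s := (univ : Finset s))
    (w := fun _ ↦ (s.card : ℝ)⁻¹) (a := fun _ ↦ 1) (b := fun x ↦ x)
    (fun _ _ ↦ by positivity) (by simp [hcard]) (fun _ _ ↦ zero_le_one) (fun x _ ↦ hx x)
  rw [finsetProd_rpow _ _ fun x _ ↦ hx x,
    finsetProd_rpow _ _ fun x _ ↦ add_nonneg zero_le_one (hx x)] at h
  have hprod : ∏ x : s, (1 + (x : ℝ)) = (s.map (1 + ·)).prod := by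
    rw [prod_eq_multiset_prod, Multiset.map_univ]
  simpa only [one_rpow, prod_const_one, ← Multiset.prod_eq_prod_coe, hprod] using h

lemma one_add_abs_prod_rpow_le_sqrt_prod_one_add_sq {s : Multiset ℝ} (hs : s ≠ 0) :
    (1 + |s.prod| ^ (2 / s.card : ℝ)) ^ (s.card / 2 : ℝ) ≤ √(s.map (1 + · ^ 2)).prod := by
  have hcard : (s.card : ℝ) ≠ 0 := by simpa using hs
  have hgeom := one_add_prod_rpow_inv_card_le (s := s.map (· ^ 2)) (by simpa using hs)
    (by simp [sq_nonneg])
  rw [Multiset.prod_map_pow, Multiset.map_id', Multiset.map_map, Multiset.card_map] at hgeom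
  have habs : |s.prod| ^ (2 / s.card : ℝ) = (s.prod ^ 2) ^ (s.card : ℝ)⁻¹ := by
    rw [← sq_abs, ← rpow_natCast, ← rpow_mul (abs_nonneg _), Nat.cast_ofNat, div_eq_mul_inv]
  have hprod : 0 ≤ (s.map (1 + · ^ 2)).prod :=
    Multiset.prod_nonneg (by simp only [Multiset.mem_map]; rintro _ ⟨x, -, rfl⟩; positivity)
  calc (1 + |s.prod| ^ (2 / s.card : ℝ)) ^ (s.card / 2 : ℝ)
      ≤ ((s.map (1 + · ^ 2)).prod ^ (s.card : ℝ)⁻¹) ^ (s.card / 2 : ℝ) := by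
        rw [habs]
        exact rpow_le_rpow (by positivity) hgeom (by positivity)
    _ = √(s.map (1 + · ^ 2)).prod := by
        rw [← rpow_mul hprod, sqrt_eq_rpow]
        congr 1
        field_simp

section ElementarySymmetric

open Polynomial

lemma sqrt_prod_one_add_sq_le_sum_abs_esymm (s : Multiset ℝ) :
    √(s.map (1 + · ^ 2)).prod ≤ ∑ m ∈ range (s.card + 1), |s.esymm m| := by
  have norm_I_add_sq (x : ℝ) : ‖Complex.I + x‖ ^ 2 = 1 + x ^ 2 := by
    rw [Complex.sq_norm, Complex.normSq_apply]
    simp only [Complex.add_re, Complex.I_re, Complex.ofReal_re, Complex.add_im, Complex.I_im,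
      Complex.ofReal_im]
    ring
  have hnorm : √(s.map (1 + · ^ 2)).prod = ‖(s.map fun x : ℝ ↦ Complex.I + x).prod‖ := by
    rw [← sqrt_sq (norm_nonneg _)]
    congr 1
    induction s using Multiset.induction_on with
    | empty => simp
    | cons x s ih => simp [ih, mul_pow, norm_I_add_sq]
  have hsum : (s.map fun x : ℝ ↦ Complex.I + x).prod =
      ∑ m ∈ range (s.card + 1), (s.esymm m : ℂ) * Complex.I ^ (s.card - m) := by
    simpa [map_multiset_prod] using congrArg (aeval Complex.I) s.prod_X_add_C_eq_sum_esymm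
  rw [hnorm, hsum]
  exact (norm_sum_le _ _).trans_eq (by simp)

/-- The elementary symmetric mean `s_m` of a multiset; multisets let the roots of a polynomial be
used without ordering them. -/
noncomputable def esymmMean {K : Type*} [Field K] (s : Multiset K) (m : ℕ) : K :=
  s.esymm m / s.card.choose m

lemma smean_eq_esymmMean (n m : ℕ) (y : Fin n → ℝ) :
    smean n m y = esymmMean (univ.val.map y) m := by
  rw [smean, esymmS, esymmMean, Finset.esymm_map_val, Multiset.card_map, card_val, card_fin]

section Field

variable {K : Type*} [Field K]

lemma esymmMean_card (s : Multiset K) : esymmMean s s.card = s.prod := by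
  simp [esymmMean, Multiset.esymm, Multiset.powersetCard_self]

lemma esymmMean_map_smul (r : K) (s : Multiset K) (m : ℕ) :
    esymmMean (s.map (r • ·)) m = r ^ m * esymmMean s m := by
  rw [esymmMean, esymmMean, ← Multiset.pow_smul_esymm, Multiset.card_map, smul_eq_mul,
    mul_div_assoc]

variable [CharZero K]

lemma choose_mul_esymmMean {s : Multiset K} {m : ℕ} (hm : m ≤ s.card) :
    s.card.choose m * esymmMean s m = s.esymm m :=
  mul_div_cancel₀ _ (Nat.cast_ne_zero.2 (Nat.choose_pos hm).ne')

lemma natDegree_mul_esymm_roots_derivative {P : K[X]} (hP : P.Splits)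
    (hP' : (derivative P).Splits) {m : ℕ} (hm : m < P.natDegree) :
    P.natDegree * (derivative P).roots.esymm m = (P.natDegree - m : K) * P.roots.esymm m := by
  obtain ⟨n, hn⟩ := Nat.exists_eq_add_one_of_ne_zero (Nat.ne_zero_of_lt hm)
  have hmn : m ≤ n := by omega
  have hn' : (derivative P).natDegree = n := by rw [natDegree_derivative, hn, Nat.add_sub_cancel]
  have hlead' : (derivative P).leadingCoeff = P.leadingCoeff * (n + 1) := by
    rw [leadingCoeff, leadingCoeff, hn, hn', coeff_derivative]
  have hcoeff : P.coeff (n - m + 1) = P.leadingCoeff * (-1) ^ m * P.roots.esymm m := by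
    rw [coeff_eq_esymm_roots_of_splits hP (by omega), hn,
      show n + 1 - (n - m + 1) = m by omega]
  have hcoeff' : (derivative P).coeff (n - m) =
      P.leadingCoeff * (n + 1) * (-1) ^ m * (derivative P).roots.esymm m := by
    rw [coeff_eq_esymm_roots_of_splits hP' (by omega), hn', hlead', Nat.sub_sub_self hmn]
  have hfactor : P.leadingCoeff * (-1) ^ m ≠ 0 :=
    mul_ne_zero (leadingCoeff_ne_zero.2 (ne_zero_of_natDegree_gt hm)) (by simp)
  rw [coeff_derivative, hcoeff, Nat.cast_sub hmn] at hcoeff'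
  apply mul_left_cancel₀ hfactor
  rw [hn, Nat.cast_add_one]
  linear_combination -hcoeff'

lemma esymmMean_roots_derivative {P : K[X]} (hP : P.Splits) (hP' : (derivative P).Splits)
    {m : ℕ} (hm : m < P.natDegree) :
    esymmMean (derivative P).roots m = esymmMean P.roots m := by
  have hesymm := natDegree_mul_esymm_roots_derivative hP hP' hm
  obtain ⟨n, hn⟩ := Nat.exists_eq_add_one_of_ne_zero (Nat.ne_zero_of_lt hm)
  rw [hn] at hm hesymm
  have hcard : P.roots.card = n + 1 := by rw [splits_iff_card_roots.1 hP, hn]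
  have hcard' : (derivative P).roots.card = n := by
    rw [splits_iff_card_roots.1 hP', natDegree_derivative, hn, Nat.add_sub_cancel]
  have hchoose : (n.choose m * (n + 1 : ℕ) : K) = (n + 1).choose m * ((n + 1 : ℕ) - m) := by
    rw [← Nat.cast_sub hm.le]
    exact_mod_cast Nat.choose_mul_succ_eq n m
  have hpos : (n.choose m : K) ≠ 0 := Nat.cast_ne_zero.2 (Nat.choose_pos (by omega)).ne'
  have hpos' : ((n + 1).choose m : K) ≠ 0 := Nat.cast_ne_zero.2 (Nat.choose_pos hm.le).ne'
  rw [esymmMean, esymmMean, hcard, hcard', div_eq_div_iff hpos hpos']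
  apply mul_left_cancel₀ (Nat.cast_ne_zero (R := K).2 n.succ_ne_zero)
  linear_combination (n + 1).choose m * hesymm - P.roots.esymm m * hchoose

end Field

lemma splits_derivative_of_real {P : ℝ[X]} (hP : P.Splits) : (derivative P).Splits := by
  rw [splits_iff_card_roots] at hP ⊢
  have hRolle := card_roots_le_derivative P
  have hdegree := natDegree_derivative P
  have := card_roots' (derivative P)
  omega

lemma exists_card_add_one_eq_forall_esymmMean_eq {s : Multiset ℝ} (hs : s ≠ 0) :
    ∃ t : Multiset ℝ, t.card + 1 = s.card ∧ ∀ m < s.card, esymmMean t m = esymmMean s m := by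
  let P : ℝ[X] := (s.map (X - C ·)).prod
  have hP : P.Splits := Splits.multisetProd (by simp)
  have hP' : (derivative P).Splits := splits_derivative_of_real hP
  have hroots : P.roots = s := roots_multiset_prod_X_sub_C s
  have hdegree : P.natDegree = s.card := natDegree_multiset_prod_X_sub_C_eq_card s
  refine ⟨(derivative P).roots, ?_, fun m hm ↦ ?_⟩
  · rw [splits_iff_card_roots.1 hP', natDegree_derivative, hdegree]
    exact Nat.sub_add_cancel (Multiset.card_pos.2 hs)
  · rw [esymmMean_roots_derivative hP hP' (hdegree ▸ hm), hroots]

lemma exists_card_eq_forall_esymmMean_eq {l : ℕ} {s : Multiset ℝ} (hl : l ≤ s.card) :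
    ∃ t : Multiset ℝ, t.card = l ∧ ∀ m ≤ l, esymmMean t m = esymmMean s m := by
  obtain ⟨k, hk⟩ := Nat.exists_eq_add_of_le hl
  clear hl
  induction k generalizing s with
  | zero => exact ⟨s, hk, fun _ _ ↦ rfl⟩
  | succ k ih =>
    obtain ⟨u, hu_card, hu⟩ := exists_card_add_one_eq_forall_esymmMean_eq (s := s)
      (Multiset.card_pos.1 (by omega))
    obtain ⟨t, ht_card, ht⟩ := ih (s := u) (by omega)
    exact ⟨t, ht_card, fun m hm ↦ (ht m hm).trans (hu m (by omega))⟩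

lemma one_add_abs_esymmMean_rpow_le {l : ℕ} (hl_pos : l ≠ 0) {s : Multiset ℝ} (hl : l ≤ s.card) :
    (1 + |esymmMean s l| ^ (2 / l : ℝ)) ^ (l / 2 : ℝ) ≤
      ∑ m ∈ range (l + 1), l.choose m * |esymmMean s m| := by
  obtain ⟨t, rfl, ht⟩ := exists_card_eq_forall_esymmMean_eq hl
  calc (1 + |esymmMean s t.card| ^ (2 / t.card : ℝ)) ^ (t.card / 2 : ℝ)
      ≤ √(t.map (1 + · ^ 2)).prod := by
        rw [← ht _ le_rfl, esymmMean_card]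
        exact one_add_abs_prod_rpow_le_sqrt_prod_one_add_sq (Multiset.card_eq_zero.not.1 hl_pos)
    _ ≤ ∑ m ∈ range (t.card + 1), |t.esymm m| := sqrt_prod_one_add_sq_le_sum_abs_esymm t
    _ = ∑ m ∈ range (t.card + 1), t.card.choose m * |esymmMean s m| := by
        refine sum_congr rfl fun m hm ↦ ?_
        have hm : m ≤ t.card := mem_range_succ_iff.1 hm
        rw [← ht m hm, ← choose_mul_esymmMean hm, abs_mul, Nat.abs_cast]

end ElementarySymmetric

theorem new_inequality_r1 :
    ∀ (n : ℕ), 1 ≤ n → ∀ (y : Fin n → ℝ) (r : ℝ), 0 < r → ∀ (ℓ : ℕ), 1 ≤ ℓ → ℓ ≤ n →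
      ∑ m ∈ Finset.range (ℓ + 1), (ℓ.choose m : ℝ) * |smean n m y| * r ^ m ≥
        (1 + |smean n ℓ y| ^ ((2 : ℝ) / ℓ) * r ^ 2) ^ ((ℓ : ℝ) / 2) := by
  intro n _ y r hr ℓ hℓ_pos hℓ
  have abs_scaled (m : ℕ) :
      |esymmMean ((univ.val.map y).map (r • ·)) m| = |smean n m y| * r ^ m := by
    rw [esymmMean_map_smul, smean_eq_esymmMean, abs_mul, abs_of_pos (pow_pos hr m), mul_comm]
  have rpow_scaled : (r ^ ℓ) ^ ((2 : ℝ) / ℓ) = r ^ 2 := by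
    rw [← rpow_natCast, ← rpow_mul hr.le, mul_div_cancel₀ _ (by positivity), rpow_two]
  have h := one_add_abs_esymmMean_rpow_le (s := (univ.val.map y).map (r • ·))
    (Nat.one_le_iff_ne_zero.1 hℓ_pos) (by simpa using hℓ)
  simpa only [abs_scaled, mul_rpow (abs_nonneg _) (pow_nonneg hr.le _), rpow_scaled,
    ← mul_assoc] using h
end

section
/- For every n ≥ 1, all real numbers y_1, …, y_n, every real r > 0, and every integer 1 ≤ ℓ ≤ n, one has Σ_{m=0}^{ℓ} binom(ℓ,m) · |s_m(y)| · r^(ℓ−m) ≥ (|s_ℓ(y)|^(2/ℓ) + r^2)^(ℓ/2). -/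
open Finset Real

/-!
Up to the factor `binom(n,ℓ)`, the polynomial `Q = ∑ m ≤ ℓ, binom(ℓ,m) s_m(y) X ^ (ℓ - m)` is the
`(n - ℓ)`-th Hasse derivative of `∏ i, (X + y i)`, so by Rolle's theorem all its roots `x j` are
real. Both sides of the inequality are compared with `|Q(ir)| = ∏ j, √(x j ^ 2 + r ^ 2)`: the
triangle inequality bounds it above, and superadditivity of the geometric mean, together with
`∏ j, |x j| = |s_ℓ(y)|`, bounds it below.
-/

open Polynomial

theorem prod_rpow_div_prod_rpow_le {ι : Type*} (s : Finset ι) (w a c : ι → ℝ)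
    (hw : ∀ i ∈ s, 0 ≤ w i) (hw' : ∑ i ∈ s, w i = 1)
    (ha : ∀ i ∈ s, 0 ≤ a i) (hc : ∀ i ∈ s, 0 ≤ c i) :
    (∏ i ∈ s, a i ^ w i) / ∏ i ∈ s, c i ^ w i ≤ ∑ i ∈ s, w i * (a i / c i) := by
  have amgm := geom_mean_le_arith_mean_weighted s w (fun i ↦ a i / c i) hw hw'
    fun i hi ↦ div_nonneg (ha i hi) (hc i hi)
  rwa [prod_congr rfl fun i hi ↦ div_rpow (ha i hi) (hc i hi) (w i), prod_div_distrib] at amgm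

theorem prod_rpow_add_prod_rpow_le {ι : Type*} (s : Finset ι) (w a b : ι → ℝ)
    (hw : ∀ i ∈ s, 0 ≤ w i) (hw' : ∑ i ∈ s, w i = 1)
    (ha : ∀ i ∈ s, 0 ≤ a i) (hb : ∀ i ∈ s, 0 ≤ b i) :
    ∏ i ∈ s, a i ^ w i + ∏ i ∈ s, b i ^ w i ≤ ∏ i ∈ s, (a i + b i) ^ w i := by
  have hab : ∀ i ∈ s, 0 ≤ a i + b i := fun i hi ↦ add_nonneg (ha i hi) (hb i hi)
  have ratios_sum :
      ∑ i ∈ s, w i * (a i / (a i + b i)) + ∑ i ∈ s, w i * (b i / (a i + b i)) ≤ 1 := by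
    rw [← sum_add_distrib, ← hw']
    refine sum_le_sum fun i hi ↦ ?_
    rw [← mul_add, ← add_div]
    exact mul_le_of_le_one_right (hw i hi) (div_self_le_one _)
  rcases (prod_nonneg fun i hi ↦ rpow_nonneg (hab i hi) (w i)).eq_or_lt with h_zero | h_pos
  · obtain ⟨i, hi, hpow⟩ := prod_eq_zero_iff.mp h_zero.symm
    obtain ⟨h_sum, hwi⟩ := (rpow_eq_zero_iff_of_nonneg (hab i hi)).mp hpow
    obtain ⟨hai, hbi⟩ := (add_eq_zero_iff_of_nonneg (ha i hi) (hb i hi)).mp h_sum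
    rw [← h_zero, prod_eq_zero hi (by rw [hai, zero_rpow hwi]),
      prod_eq_zero hi (by rw [hbi, zero_rpow hwi]), add_zero]
  · rw [← div_le_one h_pos, add_div]
    exact (add_le_add (prod_rpow_div_prod_rpow_le s w a _ hw hw' ha hab)
      (prod_rpow_div_prod_rpow_le s w b _ hw hw' hb hab)).trans ratios_sum

theorem multiset_prod_rpow_inv_card_add_le {ι : Type*} {s : Multiset ι} (hs : s ≠ 0) {a b : ι → ℝ}
    (ha : ∀ i ∈ s, 0 ≤ a i) (hb : ∀ i ∈ s, 0 ≤ b i) :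
    (s.map a).prod ^ (s.card : ℝ)⁻¹ + (s.map b).prod ^ (s.card : ℝ)⁻¹ ≤
      (s.map fun i ↦ a i + b i).prod ^ (s.card : ℝ)⁻¹ := by
  classical
  have hcard : s.card ≠ 0 := (Multiset.card_pos.mpr hs).ne'
  obtain ⟨κ, _, z, rfl⟩ : ∃ (κ : Type _) (_ : Fintype κ) (z : κ → ι), univ.val.map z = s :=
    ⟨s, inferInstance, _, s.map_univ_coe⟩
  have ha' : ∀ k ∈ univ, 0 ≤ a (z k) := fun k hk ↦ ha _ (Multiset.mem_map_of_mem z hk)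
  have hb' : ∀ k ∈ univ, 0 ≤ b (z k) := fun k hk ↦ hb _ (Multiset.mem_map_of_mem z hk)
  simp only [Multiset.card_map, card_val, card_univ, Multiset.map_map] at hcard ⊢
  have equal_weights := prod_rpow_add_prod_rpow_le univ (fun _ ↦ (Fintype.card κ : ℝ)⁻¹)
    (fun k ↦ a (z k)) (fun k ↦ b (z k)) (fun _ _ ↦ by positivity) (by simp [hcard]) ha' hb'
  rwa [finsetProd_rpow _ _ ha', finsetProd_rpow _ _ hb',
    finsetProd_rpow _ _ fun k hk ↦ add_nonneg (ha' k hk) (hb' k hk)] at equal_weights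

theorem sq_norm_aeval_mul_I {p : ℝ[X]} (hp : p.Splits) (hmonic : p.Monic) (r : ℝ) :
    ‖aeval (r * Complex.I) p‖ ^ 2 = (p.roots.map fun x ↦ x ^ 2 + r ^ 2).prod := by
  conv_lhs => rw [hp.eq_prod_roots_of_monic hmonic]
  rw [Complex.sq_norm, map_multiset_prod, map_multiset_prod, Multiset.map_map, Multiset.map_map]
  congr 1
  refine Multiset.map_congr rfl fun x _ ↦ ?_
  simp [Complex.normSq_apply, sq]

theorem rpow_le_norm_aeval_mul_I {p : ℝ[X]} (hp : p.Splits) (hmonic : p.Monic)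
    (hdeg : p.natDegree ≠ 0) (r : ℝ) :
    (|p.coeff 0| ^ (2 / p.natDegree : ℝ) + r ^ 2) ^ (p.natDegree / 2 : ℝ) ≤
      ‖aeval (r * Complex.I) p‖ := by
  have prod_sq : (p.roots.map (· ^ 2)).prod = |p.coeff 0| ^ 2 := by
    rw [Multiset.prod_map_pow, Multiset.map_id', hp.coeff_zero_eq_prod_roots_of_monic hmonic,
      abs_mul, abs_pow, abs_neg, abs_one, one_pow, one_mul, sq_abs]
  have mahler : |p.coeff 0| ^ (2 / p.natDegree : ℝ) + r ^ 2 ≤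
      ‖aeval (r * Complex.I) p‖ ^ (2 / p.natDegree : ℝ) := by
    have superadd := multiset_prod_rpow_inv_card_add_le (hp.roots_ne_zero hdeg)
      (a := (· ^ 2)) (b := fun _ ↦ r ^ 2) (fun x _ ↦ sq_nonneg x) fun _ _ ↦ sq_nonneg r
    rwa [← sq_norm_aeval_mul_I hp hmonic, prod_sq, Multiset.map_const', Multiset.prod_replicate,
      ← hp.natDegree_eq_card_roots, pow_rpow_inv_natCast (sq_nonneg r) hdeg,
      ← rpow_natCast_mul (abs_nonneg _), ← rpow_natCast_mul (norm_nonneg _), Nat.cast_ofNat,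
      ← div_eq_mul_inv] at superadd
  rwa [← le_rpow_inv_iff_of_pos (by positivity) (norm_nonneg _) (by positivity), inv_div]

theorem splits_derivative {p : ℝ[X]} (hp : p.Splits) : (derivative p).Splits := by
  rcases eq_or_ne p.natDegree 0 with hdeg | hdeg
  · rw [derivative_of_natDegree_zero hdeg]
    exact Splits.zero
  · rw [splits_iff_card_roots] at hp ⊢
    have rolle := card_roots_le_derivative p
    have card_le := card_roots' (derivative p)
    have deg_lt := natDegree_derivative_lt hdeg
    lia

theorem splits_hasseDeriv {p : ℝ[X]} (hp : p.Splits) (k : ℕ) : (hasseDeriv k p).Splits := by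
  have iterate_splits : (derivative^[k] p).Splits :=
    Function.Iterate.rec (fun q : ℝ[X] ↦ q.Splits) hp (fun _ ↦ splits_derivative) k
  rw [← factorial_smul_hasseDeriv, LinearMap.smul_apply, nsmul_eq_mul, ← C_eq_natCast]
    at iterate_splits
  refine (splits_mul_iff_right ?_ (.C _)).mp iterate_splits
  exact C_ne_zero.mpr (Nat.cast_ne_zero.mpr k.factorial_ne_zero)

/-- The generating polynomial `∑ m ≤ ℓ, binom(ℓ,m) s_m(y) X ^ (ℓ - m)` of the symmetric means of
order at most `ℓ`; its coefficients run downwards, so that it is monic and has `s_ℓ(y)` as its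
constant term. It equals `∏ i, (X + y i)` for `ℓ = n`. -/
noncomputable def smeanPoly (n ℓ : ℕ) (y : Fin n → ℝ) : ℝ[X] :=
  ∑ m ∈ range (ℓ + 1), C (ℓ.choose m * smean n m y) * X ^ (ℓ - m)

section smeanPoly

variable {n ℓ m : ℕ} (y : Fin n → ℝ)

theorem smean_zero : smean n 0 y = 1 := by
  simp [smean, esymmS]

theorem prod_X_add_C_coeff_sub (hm : m ≤ n) :
    (∏ i, (X + C (y i))).coeff (n - m) = n.choose m * smean n m y := by
  have hchoose : (n.choose m : ℝ) ≠ 0 := mod_cast (Nat.choose_pos hm).ne'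
  rw [prod_X_add_C_coeff _ _ (by simp), smean, mul_div_cancel₀ _ hchoose, card_fin,
    Nat.sub_sub_self hm, esymmS]

theorem coeff_smeanPoly_sub (hm : m ≤ ℓ) :
    (smeanPoly n ℓ y).coeff (ℓ - m) = ℓ.choose m * smean n m y := by
  rw [smeanPoly, finsetSum_coeff, sum_eq_single_of_mem m (by simpa [Nat.lt_succ_iff] using hm)]
  · rw [coeff_C_mul_X_pow, if_pos rfl]
  · intro k hk hkm
    rw [coeff_C_mul_X_pow, if_neg (by grind)]

theorem coeff_zero_smeanPoly : (smeanPoly n ℓ y).coeff 0 = smean n ℓ y := by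
  simpa using coeff_smeanPoly_sub y le_rfl

theorem natDegree_smeanPoly_le : (smeanPoly n ℓ y).natDegree ≤ ℓ :=
  natDegree_sum_le_of_forall_le _ _ fun _ _ ↦
    (natDegree_C_mul_X_pow_le _ _).trans (Nat.sub_le _ _)

theorem coeff_self_smeanPoly : (smeanPoly n ℓ y).coeff ℓ = 1 := by
  simpa [smean_zero] using coeff_smeanPoly_sub y ℓ.zero_le

theorem monic_smeanPoly : (smeanPoly n ℓ y).Monic :=
  monic_of_natDegree_le_of_coeff_eq_one ℓ (natDegree_smeanPoly_le y) (coeff_self_smeanPoly y)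

theorem natDegree_smeanPoly : (smeanPoly n ℓ y).natDegree = ℓ :=
  natDegree_eq_of_le_of_coeff_ne_zero (natDegree_smeanPoly_le y) (by simp [coeff_self_smeanPoly])

theorem hasseDeriv_prod_X_add_C (hℓ : ℓ ≤ n) :
    hasseDeriv (n - ℓ) (∏ i, (X + C (y i))) = C (n.choose ℓ : ℝ) * smeanPoly n ℓ y := by
  ext k
  rw [coeff_C_mul, hasseDeriv_coeff]
  rcases le_or_gt k ℓ with hk | hk
  · obtain ⟨m, hm, rfl⟩ : ∃ m ≤ ℓ, k = ℓ - m := ⟨ℓ - k, by lia, by lia⟩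
    have hchoose : ((n - m).choose (n - ℓ) * n.choose m : ℝ) = n.choose ℓ * ℓ.choose m := by
      rw [Nat.choose_symm_of_eq_add (show n - m = (n - ℓ) + (ℓ - m) by lia)]
      exact_mod_cast (mul_comm _ _).trans (Nat.choose_mul hm).symm
    rw [show ℓ - m + (n - ℓ) = n - m by lia, prod_X_add_C_coeff_sub y (hm.trans hℓ),
      coeff_smeanPoly_sub y hm, ← mul_assoc, ← mul_assoc, hchoose]
  · rw [coeff_eq_zero_of_natDegree_lt ((natDegree_smeanPoly_le y).trans_lt hk),
      coeff_eq_zero_of_natDegree_lt, mul_zero, mul_zero]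
    rw [natDegree_prod_of_monic _ _ fun i _ ↦ monic_X_add_C (y i)]
    simp only [natDegree_X_add_C, sum_const, card_fin, smul_eq_mul, mul_one]
    lia

theorem splits_smeanPoly (hℓ : ℓ ≤ n) : (smeanPoly n ℓ y).Splits := by
  have hsplits : (hasseDeriv (n - ℓ) (∏ i, (X + C (y i)))).Splits :=
    splits_hasseDeriv (.prod fun i _ ↦ .X_add_C (y i)) _
  rw [hasseDeriv_prod_X_add_C y hℓ] at hsplits
  refine (splits_mul_iff_right ?_ (.C _)).mp hsplits
  exact C_ne_zero.mpr (Nat.cast_ne_zero.mpr (Nat.choose_pos hℓ).ne')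

theorem norm_aeval_smeanPoly_le {A : Type*} [NormedRing A] [NormedAlgebra ℝ A] [NormOneClass A]
    (z : A) :
    ‖aeval z (smeanPoly n ℓ y)‖ ≤
      ∑ m ∈ range (ℓ + 1), ℓ.choose m * |smean n m y| * ‖z‖ ^ (ℓ - m) := by
  rw [smeanPoly, map_sum]
  refine norm_sum_le_of_le _ fun m _ ↦ ?_
  rw [map_mul, map_pow, aeval_C, aeval_X, ← Algebra.smul_def, norm_smul, norm_mul, norm_natCast,
    norm_eq_abs]
  gcongr
  exact norm_pow_le z _

end smeanPoly

theorem new_inequality_r2 :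
    ∀ (n : ℕ), 1 ≤ n → ∀ (y : Fin n → ℝ) (r : ℝ), 0 < r → ∀ (ℓ : ℕ), 1 ≤ ℓ → ℓ ≤ n →
      ∑ m ∈ Finset.range (ℓ + 1), (ℓ.choose m : ℝ) * |smean n m y| * r ^ (ℓ - m) ≥
        (|smean n ℓ y| ^ ((2 : ℝ) / ℓ) + r ^ 2) ^ ((ℓ : ℝ) / 2) := by
  intro n _ y r hr ℓ hℓ hℓn
  have lower := rpow_le_norm_aeval_mul_I (splits_smeanPoly y hℓn) (monic_smeanPoly y)
    (by rw [natDegree_smeanPoly]; lia) r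
  have upper := norm_aeval_smeanPoly_le (ℓ := ℓ) y (r * Complex.I)
  rw [coeff_zero_smeanPoly, natDegree_smeanPoly] at lower
  rw [norm_mul, Complex.norm_I, mul_one, Complex.norm_real, norm_of_nonneg hr.le] at upper
  exact lower.trans upper
end

section
/- For every n ≥ 2 and all real numbers y_1, …, y_n, one has |s_n(y)|^(2/n) ≤ max( 2n · |s_1(y)|^2, 2n · |s_2(y)| ). -/
open Finset Real

/-!
By AM-GM, `|s_n|^(2/n) = (∏ y_i²)^(1/n)` is at most the mean of the `y_i²`. Newton's second identity
`∑ y_i² = (∑ y_i)² - 2 ∑_{i<j} y_i y_j` expresses that mean through the first two symmetric means,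
as `n s_1² - (n - 1) s_2`, and each of the two terms is at most half the claimed maximum.
-/

section NewtonIdentity

variable {σ R : Type*} [Fintype σ] [CommRing R]

theorem psum_two_eq_sq_sum_sub_two_mul_esymm_two :
    MvPolynomial.psum σ R 2 =
      (∑ i, MvPolynomial.X i) ^ 2 - 2 * MvPolynomial.esymm σ R 2 := by
  have antidiagonal_Ioo :
      {a ∈ antidiagonal 2 | a.1 ∈ Set.Ioo 0 2} = ({(1, 1)} : Finset (ℕ × ℕ)) := by
    decide
  have newton := MvPolynomial.psum_eq_mul_esymm_sub_sum σ R 2 two_pos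
  rw [antidiagonal_Ioo, sum_singleton, MvPolynomial.esymm_one, MvPolynomial.psum_one] at newton
  push_cast at newton
  linear_combination newton

theorem sum_sq_eq_sq_sum_sub_two_mul_sum_powersetCard (y : σ → R) :
    ∑ i, y i ^ 2 = (∑ i, y i) ^ 2 - 2 * ∑ A ∈ powersetCard 2 univ, ∏ i ∈ A, y i := by
  simpa [MvPolynomial.psum, MvPolynomial.esymm] using
    congrArg (MvPolynomial.eval y) (psum_two_eq_sq_sum_sub_two_mul_esymm_two (σ := σ) (R := R))

end NewtonIdentity

theorem abs_prod_rpow_div_card_le {ι : Type*} {s : Finset ι} (hs : s.Nonempty) (y : ι → ℝ)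
    (p : ℝ) :
    |∏ i ∈ s, y i| ^ (p / #s) ≤ (∑ i ∈ s, |y i| ^ p) / #s := by
  have card_pos : (0 : ℝ) < #s := by exact_mod_cast hs.card_pos
  calc |∏ i ∈ s, y i| ^ (p / #s)
      = ∏ i ∈ s, (|y i| ^ p) ^ (1 / #s : ℝ) := by
        rw [abs_prod, ← finsetProd_rpow s _ fun i _ ↦ abs_nonneg (y i)]
        refine prod_congr rfl fun i _ ↦ ?_
        rw [← rpow_mul (abs_nonneg _), mul_one_div]
    _ ≤ ∑ i ∈ s, 1 / #s * |y i| ^ p :=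
        geom_mean_le_arith_mean_weighted s _ _ (fun _ _ ↦ by positivity)
          (by simp [card_pos.ne']) fun _ _ ↦ by positivity
    _ = (∑ i ∈ s, |y i| ^ p) / #s := by
        rw [← mul_sum, one_div_mul_eq_div]

section SymmetricMeans

variable {n : ℕ} (y : Fin n → ℝ)

theorem choose_mul_smean (m : ℕ) : n.choose m * smean n m y = esymmS n m y := by
  rcases le_or_gt m n with hm | hm
  · have choose_ne_zero : (n.choose m : ℝ) ≠ 0 := by exact_mod_cast (Nat.choose_pos hm).ne'
    exact mul_div_cancel₀ _ choose_ne_zero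
  · have no_subsets : powersetCard m (univ : Finset (Fin n)) = ∅ :=
      powersetCard_eq_empty.2 (by simpa using hm)
    simp [esymmS, no_subsets, Nat.choose_eq_zero_of_lt hm]

theorem smean_self : smean n n y = ∏ i, y i := by
  have only_univ : powersetCard n (univ : Finset (Fin n)) = {univ} := by
    simpa using powersetCard_self (univ : Finset (Fin n))
  simp [smean, esymmS, only_univ]

theorem sum_eq_mul_smean_one : ∑ i, y i = n * smean n 1 y := by
  simpa [esymmS, powersetCard_one] using (choose_mul_smean y 1).symm

theorem sum_sq_eq_smean :
    ∑ i, y i ^ 2 = n * (n * smean n 1 y ^ 2 - (n - 1) * smean n 2 y) := by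
  have pairs : n * (n - 1) / 2 * smean n 2 y = esymmS n 2 y := by
    rw [← choose_mul_smean, Nat.cast_choose_two]
  rw [sum_sq_eq_sq_sum_sub_two_mul_sum_powersetCard, sum_eq_mul_smean_one, ← esymmS, ← pairs]
  ring

theorem abs_smean_self_rpow_two_div_le (hn : n ≠ 0) :
    |smean n n y| ^ ((2 : ℝ) / n) ≤ n * smean n 1 y ^ 2 - (n - 1) * smean n 2 y := by
  have : NeZero n := ⟨hn⟩
  calc |smean n n y| ^ ((2 : ℝ) / n)
      ≤ (∑ i, y i ^ 2) / n := by
        simpa [smean_self] using abs_prod_rpow_div_card_le univ_nonempty y 2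
    _ = n * smean n 1 y ^ 2 - (n - 1) * smean n 2 y := by
        rw [sum_sq_eq_smean, mul_div_cancel_left₀ _ (Nat.cast_ne_zero.2 hn)]

end SymmetricMeans

theorem sn_bound_max (n : ℕ) (hn : 2 ≤ n) (y : Fin n → ℝ) :
    |smean n n y| ^ ((2 : ℝ) / n) ≤
      max (2 * n * |smean n 1 y| ^ 2) (2 * n * |smean n 2 y|) := by
  have hn_one : (1 : ℝ) ≤ n := by exact_mod_cast one_le_two.trans hn
  have neg_second_le : -((n - 1) * smean n 2 y) ≤ n * |smean n 2 y| :=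
    calc -((n - 1) * smean n 2 y)
        ≤ |(n - 1) * smean n 2 y| := neg_le_abs _
      _ = (n - 1) * |smean n 2 y| := by rw [abs_mul, abs_of_nonneg (sub_nonneg.2 hn_one)]
      _ ≤ n * |smean n 2 y| := by gcongr; exact sub_le_self _ zero_le_one
  calc |smean n n y| ^ ((2 : ℝ) / n)
      ≤ n * smean n 1 y ^ 2 - (n - 1) * smean n 2 y := abs_smean_self_rpow_two_div_le y (by lia)
    _ ≤ n * |smean n 1 y| ^ 2 + n * |smean n 2 y| := by
        rw [sq_abs]
        linarith
    _ ≤ max (2 * n * |smean n 1 y| ^ 2) (2 * n * |smean n 2 y|) := by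
        linarith [le_max_left (2 * n * |smean n 1 y| ^ 2) (2 * n * |smean n 2 y|),
          le_max_right (2 * n * |smean n 1 y| ^ 2) (2 * n * |smean n 2 y|)]
end
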